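/- There exists an absolute constant c > 0 such that for every d ≥ 1, every n ∈ ℕ and every function f : {0,1}^n → {0,1}, E_x[‖∇f(x)‖₂] ≥ c·√d·W_{≥d}[f]. -/

import Mathlib

open Finset

noncomputable section

/-- Expectation over the uniform distribution on `{0,1}^n`. -/
def hcExp (n : ℕ) (g : (Fin n → Bool) → ℝ) : ℝ :=
  (∑ x : Fin n → Bool, g x) / 2 ^ n

/-- Flip the `i`-th coordinate of `x`. -/
def hcFlip {n : ℕ} (x : Fin n → Bool) (i : Fin n) : Fin n → Bool :=
  Function.update x i (!(x i))

/-- Sensitivity of `f` at `x`. -/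
def sens {n : ℕ} (f : (Fin n → Bool) → Bool) (x : Fin n → Bool) : ℕ :=
  (Finset.univ.filter fun i => f (hcFlip x i) ≠ f x).card

/-- `f` with values in `{0,1} ⊆ ℝ`. -/
def toReal {n : ℕ} (f : (Fin n → Bool) → Bool) : (Fin n → Bool) → ℝ :=
  fun x => if f x then 1 else 0

/-- Variance of a Boolean function. -/
def hcVar (n : ℕ) (f : (Fin n → Bool) → Bool) : ℝ :=
  hcExp n (toReal f) - (hcExp n (toReal f)) ^ 2

/-- Influence of coordinate `i`. -/
def influence (n : ℕ) (f : (Fin n → Bool) → Bool) (i : Fin n) : ℝ :=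
  hcExp n (fun x => if f (hcFlip x i) = f x then 0 else 1)

/-- Fourier character. -/
def chi {n : ℕ} (S : Finset (Fin n)) (x : Fin n → Bool) : ℝ :=
  ∏ i ∈ S, (if x i then (-1 : ℝ) else 1)

/-- Fourier coefficient of `g` at `S`. -/
def fcoef (n : ℕ) (g : (Fin n → Bool) → ℝ) (S : Finset (Fin n)) : ℝ :=
  hcExp n (fun x => g x * chi S x)

/-- Derivative of `g` along coordinate `i`. -/
def derivOn {n : ℕ} (g : (Fin n → Bool) → ℝ) (i : Fin n) (x : Fin n → Bool) : ℝ :=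
  g (Function.update x i false) - g (Function.update x i true)

/-- Euclidean norm of the gradient of `g` at `x`. -/
def gradNorm2 {n : ℕ} (g : (Fin n → Bool) → ℝ) (x : Fin n → Bool) : ℝ :=
  Real.sqrt (∑ i, (derivOn g i x) ^ 2)

/-- `ℓ_p` norm of the gradient of `g` at `x`. -/
def gradNormP {n : ℕ} (p : ℝ) (g : (Fin n → Bool) → ℝ) (x : Fin n → Bool) : ℝ :=
  (∑ i, |derivOn g i x| ^ p) ^ (1 / p)

/-- Fourier weight at exactly level `d`. -/
def wEq (n : ℕ) (g : (Fin n → Bool) → ℝ) (d : ℕ) : ℝ :=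
  ∑ S ∈ Finset.univ.filter (fun S : Finset (Fin n) => S.card = d), (fcoef n g S) ^ 2

/-- Approximate level-`d` Fourier weight: levels in `[d, 2d)`. -/
def wApprox (n : ℕ) (g : (Fin n → Bool) → ℝ) (d : ℕ) : ℝ :=
  ∑ S ∈ Finset.univ.filter (fun S : Finset (Fin n) => d ≤ S.card ∧ S.card < 2 * d),
    (fcoef n g S) ^ 2

/-- Fourier weight at levels `≥ d`. -/
def wGe (n : ℕ) (g : (Fin n → Bool) → ℝ) (d : ℕ) : ℝ :=
  ∑ S ∈ Finset.univ.filter (fun S : Finset (Fin n) => d ≤ S.card), (fcoef n g S) ^ 2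

def sg (b : Bool) : ℝ := if b then -1 else 1

lemma sg_sq (b : Bool) : sg b * sg b = 1 := by cases b <;> simp [sg]

def PK {n : ℕ} (r : ℝ) (x y : Fin n → Bool) : ℝ := ∏ i, ((1 + r * (sg (x i) * sg (y i))) / 2)

lemma PK_nonneg {n : ℕ} (r : ℝ) (h0 : -1 ≤ r) (h1 : r ≤ 1) (x y : Fin n → Bool) : 0 ≤ PK r x y := by
  apply Finset.prod_nonneg
  intro i _
  cases x i <;> cases y i <;> simp [sg] <;> linarith

lemma sum_prod_bool {n : ℕ} (g : Fin n → Bool → ℝ) :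
    ∑ y : Fin n → Bool, ∏ i, g i (y i) = ∏ i, (g i true + g i false) := by
  have := (Fintype.prod_sum (f := g))
  simp only [Fintype.sum_bool] at this
  exact this.symm

lemma PK_sum {n : ℕ} (r : ℝ) (x : Fin n → Bool) : ∑ y, PK r x y = 1 := by
  unfold PK
  rw [sum_prod_bool (fun i b => (1 + r * (sg (x i) * sg b)) / 2)]
  apply Finset.prod_eq_one
  intro i _
  simp [sg]
  ring

def dl {n : ℕ} (r : ℝ) (x y : Fin n → Bool) (i : Fin n) : ℝ := sg (y i) - r * sg (x i)

lemma PK_orth {n : ℕ} (r : ℝ) (x : Fin n → Bool) (i j : Fin n) :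
    ∑ y, PK r x y * (dl r x y i * dl r x y j) = if i = j then 1 - r ^ 2 else 0 := by
  have key : ∀ y, PK r x y * (dl r x y i * dl r x y j) =
      ∏ k, ((fun k b => (1 + r * (sg (x k) * sg b)) / 2 *
        ((if i = k then (sg b - r * sg (x k)) else 1) *
         (if j = k then (sg b - r * sg (x k)) else 1))) k (y k)) := by
    intro y
    simp only [Finset.prod_mul_distrib, Finset.prod_ite_eq, Finset.mem_univ, if_true]
    rfl
  rw [Finset.sum_congr rfl (fun y _ => key y)]
  refine (sum_prod_bool (fun k b => (1 + r * (sg (x k) * sg b)) / 2 *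
        ((if i = k then (sg b - r * sg (x k)) else 1) *
         (if j = k then (sg b - r * sg (x k)) else 1)))).trans ?_
  by_cases h : i = j
  · subst h
    rw [if_pos rfl, ← Finset.mul_prod_erase _ _ (Finset.mem_univ i), Finset.prod_eq_one]
    · cases x i <;> simp [sg] <;> ring
    · intro k hk
      have : i ≠ k := fun h => by simp [h] at hk
      simp [this, sg]
      ring
  · rw [if_neg h]
    apply Finset.prod_eq_zero (Finset.mem_univ i)
    have : j ≠ i := fun e => h e.symm
    simp [this]
    cases x i <;> simp [sg] <;> ring

def wv {n : ℕ} (r : ℝ) (g : (Fin n → Bool) → ℝ) (x : Fin n → Bool) (i : Fin n) : ℝ :=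
  ∑ y, PK r x y * (g y * dl r x y i)

lemma wv_bessel {n : ℕ} (r : ℝ) (h0 : -1 ≤ r) (h1 : r ≤ 1) (g : (Fin n → Bool) → ℝ)
    (hg : ∀ x, g x ^ 2 ≤ 1) (x : Fin n → Bool) :
    ∑ i, wv r g x i ^ 2 ≤ 1 - r ^ 2 := by
  set w := wv r g x with hw
  set L : (Fin n → Bool) → ℝ := fun y => ∑ i, w i * dl r x y i with hL
  have e1 : ∑ y, PK r x y * (g y * L y) = ∑ i, w i ^ 2 := by
    simp_rw [hL, Finset.mul_sum]
    rw [Finset.sum_comm]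
    apply Finset.sum_congr rfl
    intro i _
    have : w i ^ 2 = w i * ∑ y, PK r x y * (g y * dl r x y i) := by rw [sq]; rfl
    rw [this, Finset.mul_sum]
    apply Finset.sum_congr rfl
    intro y _
    ring
  have e2 : ∑ y, PK r x y * L y ^ 2 = (1 - r ^ 2) * ∑ i, w i ^ 2 := by
    have : ∀ y, PK r x y * L y ^ 2 =
        ∑ i, ∑ j, (w i * w j) * (PK r x y * (dl r x y i * dl r x y j)) := by
      intro y
      rw [sq, hL]
      simp only
      rw [Finset.sum_mul_sum, Finset.mul_sum]
      apply Finset.sum_congr rfl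
      intro i _
      rw [Finset.mul_sum]
      apply Finset.sum_congr rfl
      intro j _
      ring
    simp_rw [this]
    rw [Finset.sum_comm, Finset.mul_sum]
    apply Finset.sum_congr rfl
    intro i _
    rw [Finset.sum_comm]
    simp_rw [← Finset.mul_sum, PK_orth]
    simp
    ring
  have e3 : 0 ≤ ∑ y, PK r x y * ((1 - r ^ 2) * g y - L y) ^ 2 :=
    Finset.sum_nonneg fun y _ => mul_nonneg (PK_nonneg r h0 h1 x y) (sq_nonneg _)
  have e4 : ∑ y, PK r x y * ((1 - r ^ 2) * g y - L y) ^ 2 =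
      (1 - r ^ 2) ^ 2 * ∑ y, PK r x y * g y ^ 2 - 2 * (1 - r ^ 2) * ∑ y, PK r x y * (g y * L y)
        + ∑ y, PK r x y * L y ^ 2 := by
    rw [Finset.mul_sum, Finset.mul_sum, ← Finset.sum_sub_distrib, ← Finset.sum_add_distrib]
    apply Finset.sum_congr rfl
    intro y _
    ring
  have e5 : ∑ y, PK r x y * g y ^ 2 ≤ 1 := by
    rw [← PK_sum r x]
    apply Finset.sum_le_sum
    intro y _
    exact mul_le_of_le_one_right (PK_nonneg r h0 h1 x y) (hg y)
  rw [e1, e2] at e4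
  have hr : 0 ≤ 1 - r ^ 2 := by nlinarith
  rcases hr.eq_or_lt with h | h
  · -- degenerate
    have e7 : ∀ y ∈ Finset.univ, PK r x y * L y ^ 2 = 0 := by
      rw [← Finset.sum_eq_zero_iff_of_nonneg, e2, ← h, zero_mul]
      exact fun y _ => mul_nonneg (PK_nonneg r h0 h1 x y) (sq_nonneg _)
    rw [← e1, ← h]
    apply le_of_eq
    apply Finset.sum_eq_zero
    intro y hy
    rcases mul_eq_zero.1 (e7 y hy) with h | h
    · simp [h]
    · simp [pow_eq_zero_iff] at h; simp [h]
  · rw [e4] at e3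
    by_contra hc
    push Not at hc
    nlinarith [mul_le_mul_of_nonneg_left e5 (sq_nonneg (1 - r ^ 2)), mul_lt_mul_of_pos_left hc h]

lemma chi_eq {n : ℕ} (S : Finset (Fin n)) (x : Fin n → Bool) : chi S x = ∏ i ∈ S, sg (x i) := rfl

lemma PK_dl {n : ℕ} (r : ℝ) (x y : Fin n → Bool) (i : Fin n) :
    PK r x y * dl r x y i = (1 - r ^ 2) / 2 ^ n *
      ∑ T ∈ (Finset.univ.erase i).powerset, r ^ T.card * chi T x * chi (insert i T) y := by
  have h1 : PK r x y = (∏ i, (1 + r * (sg (x i) * sg (y i)))) / 2 ^ n := by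
    unfold PK
    rw [Finset.prod_div_distrib]
    simp
  rw [h1, ← Finset.mul_prod_erase _ _ (Finset.mem_univ i), Finset.prod_one_add]
  have h2 : (1 + r * (sg (x i) * sg (y i))) * dl r x y i = (1 - r ^ 2) * sg (y i) := by
    unfold dl
    cases x i <;> cases y i <;> simp [sg] <;> ring
  calc _ = ((1 + r * (sg (x i) * sg (y i))) * dl r x y i) *
      (∑ T ∈ (Finset.univ.erase i).powerset, ∏ i ∈ T, r * (sg (x i) * sg (y i))) / 2 ^ n := by ring
    _ = (1 - r ^ 2) / 2 ^ n * (sg (y i) *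
      (∑ T ∈ (Finset.univ.erase i).powerset, ∏ i ∈ T, r * (sg (x i) * sg (y i)))) := by
        rw [h2]; ring
    _ = _ := by
        congr 1
        rw [Finset.mul_sum]
        apply Finset.sum_congr rfl
        intro T hT
        have : i ∉ T := fun h => by simpa using Finset.mem_powerset.1 hT h
        rw [chi_eq, chi_eq, Finset.prod_insert this, Finset.prod_mul_distrib,
          Finset.prod_mul_distrib, Finset.prod_const]
        ring

lemma wv_fourier {n : ℕ} (r : ℝ) (g : (Fin n → Bool) → ℝ) (x : Fin n → Bool) (i : Fin n) :
    wv r g x i = (1 - r ^ 2) * ∑ T ∈ (Finset.univ.erase i).powerset,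
      r ^ T.card * chi T x * fcoef n g (insert i T) := by
  unfold wv fcoef hcExp
  have : ∀ y, PK r x y * (g y * dl r x y i) = ∑ T ∈ (Finset.univ.erase i).powerset,
      (1 - r ^ 2) * (r ^ T.card * chi T x * (g y * chi (insert i T) y / 2 ^ n)) := by
    intro y
    rw [mul_left_comm, PK_dl, Finset.mul_sum, Finset.mul_sum]
    apply Finset.sum_congr rfl
    intro T _
    ring
  simp_rw [this]
  rw [Finset.sum_comm, Finset.mul_sum]
  apply Finset.sum_congr rfl
  intro T _
  rw [Finset.sum_div, Finset.mul_sum, Finset.mul_sum]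

lemma sum_split {n : ℕ} (i : Fin n) (h : (Fin n → Bool) → ℝ) :
    2 * ∑ x, h x = ∑ x, (h (Function.update x i false) + h (Function.update x i true)) := by
  have e : ∑ x, h (hcFlip x i) = ∑ x, h x := by
    have inv : Function.Involutive (fun x : Fin n → Bool => hcFlip x i) := by
      intro x
      simp [hcFlip]
    exact Equiv.sum_comp inv.toPerm h
  calc 2 * ∑ x, h x = ∑ x, h x + ∑ x, h (hcFlip x i) := by rw [e]; ring
    _ = ∑ x, (h x + h (hcFlip x i)) := by rw [Finset.sum_add_distrib]
    _ = _ := by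
      apply Finset.sum_congr rfl
      intro x _
      unfold hcFlip
      cases hx : x i
      · have : Function.update x i false = x := by rw [← hx]; simp
        simp [this]
      · have : Function.update x i true = x := by rw [← hx]; simp
        simp [this, add_comm]

lemma chi_update {n : ℕ} (T : Finset (Fin n)) (i : Fin n) (h : i ∉ T) (x : Fin n → Bool) (b : Bool) :
    chi T (Function.update x i b) = chi T x := by
  rw [chi_eq, chi_eq]
  apply Finset.prod_congr rfl
  intro j hj
  have : j ≠ i := fun e => h (e ▸ hj)
  simp [this]

lemma deriv_fourier {n : ℕ} (g : (Fin n → Bool) → ℝ) (i : Fin n) (T : Finset (Fin n)) (h : i ∉ T) :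
    ∑ x, derivOn g i x * chi T x = 2 ^ n * (2 * fcoef n g (insert i T)) := by
  unfold fcoef hcExp
  have : (2 : ℝ) ^ n * (2 * ((∑ x, g x * chi (insert i T) x) / 2 ^ n)) =
      2 * ∑ x, g x * chi (insert i T) x := by field_simp
  rw [this, sum_split i]
  apply Finset.sum_congr rfl
  intro x _
  have c : ∀ b, chi (insert i T) (Function.update x i b) = sg b * chi T x := by
    intro b
    rw [← chi_update T i h x b, chi_eq, chi_eq, Finset.prod_insert h]
    simp
  rw [c, c]
  simp [sg, derivOn]
  ring

lemma reindex {n : ℕ} (r : ℝ) (F : Finset (Fin n) → ℝ) :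
    ∑ i, ∑ T ∈ (Finset.univ.erase i).powerset, r ^ T.card * F (insert i T) =
      ∑ S, (S.card : ℝ) * r ^ (S.card - 1) * F S := by
  have : ∀ i : Fin n, ∑ T ∈ (Finset.univ.erase i).powerset, r ^ T.card * F (insert i T) =
      ∑ S, if i ∈ S then r ^ (S.card - 1) * F S else 0 := by
    intro i
    rw [← Finset.sum_filter]
    apply Finset.sum_nbij' (fun T => insert i T) (fun S => S.erase i)
    · intro T _; simp
    · intro S _; simp [Finset.erase_subset_erase]
    · intro T hT
      have : i ∉ T := fun h => by simpa using Finset.mem_powerset.1 hT h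
      simp [this]
    · intro S hS
      simp at hS
      simp [Finset.insert_erase hS]
    · intro T hT
      have : i ∉ T := fun h => by simpa using Finset.mem_powerset.1 hT h
      simp [this]
  simp_rw [this]
  rw [Finset.sum_comm]
  apply Finset.sum_congr rfl
  intro S _
  rw [← Finset.sum_filter]
  simp
  ring

lemma pairing {n : ℕ} (r : ℝ) (g : (Fin n → Bool) → ℝ) :
    hcExp n (fun x => ∑ i, derivOn g i x * wv r g x i) =
      2 * (1 - r ^ 2) * ∑ S, (S.card : ℝ) * r ^ (S.card - 1) * fcoef n g S ^ 2 := by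
  rw [← reindex r (fun S => fcoef n g S ^ 2)]
  unfold hcExp
  rw [div_eq_iff (by positivity), Finset.sum_comm, Finset.mul_sum, Finset.sum_mul]
  apply Finset.sum_congr rfl
  intro i _
  simp_rw [wv_fourier, Finset.mul_sum]
  rw [Finset.sum_comm, Finset.sum_mul]
  apply Finset.sum_congr rfl
  intro T hT
  have hi : i ∉ T := fun h => by simpa using Finset.mem_powerset.1 hT h
  have : ∀ x, derivOn g i x * ((1 - r ^ 2) * (r ^ T.card * chi T x * fcoef n g (insert i T))) =
     ((1 - r ^ 2) * (r ^ T.card * fcoef n g (insert i T))) * (derivOn g i x * chi T x) := by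
    intro x; ring
  simp_rw [this]
  rw [← Finset.mul_sum, deriv_fourier g i T hi]
  ring

lemma key_ineq {n : ℕ} (t : ℝ) (ht : 0 < Real.sin t) (g : (Fin n → Bool) → ℝ)
    (hg : ∀ x, g x ^ 2 ≤ 1) :
    2 * Real.sin t * ∑ S, (S.card : ℝ) * Real.cos t ^ (S.card - 1) * fcoef n g S ^ 2 ≤
      hcExp n (fun x => gradNorm2 g x) := by
  have h1 : hcExp n (fun x => ∑ i, derivOn g i x * wv (Real.cos t) g x i) ≤
      Real.sin t * hcExp n (fun x => gradNorm2 g x) := by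
    unfold hcExp
    rw [← mul_div_assoc, Finset.mul_sum]
    gcongr with x _
    refine (Real.sum_mul_le_sqrt_mul_sqrt _ _ _).trans ?_
    rw [mul_comm]
    apply mul_le_mul_of_nonneg_right _ (Real.sqrt_nonneg _)
    apply Real.sqrt_le_iff.2 ⟨ht.le, ?_⟩
    have := wv_bessel (Real.cos t) (Real.neg_one_le_cos t) (Real.cos_le_one t) g hg x
    rw [Real.sin_sq]
    exact this
  rw [pairing, ← Real.sin_sq] at h1
  apply le_of_mul_le_mul_left _ ht
  calc _ = _ := by ring
    _ ≤ _ := h1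

lemma integrated {n : ℕ} (t : ℝ) (h0 : 0 ≤ t) (h1 : t ≤ 1) (g : (Fin n → Bool) → ℝ)
    (hg : ∀ x, g x ^ 2 ≤ 1) :
    2 * ∑ S, (1 - Real.cos t ^ S.card) * fcoef n g S ^ 2 ≤
      t * hcExp n (fun x => gradNorm2 g x) := by
  set E := hcExp n (fun x => gradNorm2 g x) with hE
  let h : ℝ → ℝ := fun t => t * E - 2 * ∑ S, (1 - Real.cos t ^ S.card) * fcoef n g S ^ 2
  have hd : ∀ s, HasDerivAt h (1 * E - 2 * ∑ S : Finset (Fin n),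
      (-((S.card : ℝ) * Real.cos s ^ (S.card - 1) * (-Real.sin s))) * fcoef n g S ^ 2) s := by
    intro s
    apply HasDerivAt.sub ((hasDerivAt_id s).mul_const E)
    apply HasDerivAt.const_mul
    apply HasDerivAt.fun_sum
    intro S _
    apply HasDerivAt.mul_const
    exact ((Real.hasDerivAt_cos s).pow S.card).const_sub 1
  have mono : MonotoneOn h (Set.Icc 0 1) := by
    apply monotoneOn_of_deriv_nonneg (convex_Icc 0 1)
    · exact fun s _ => (hd s).continuousAt.continuousWithinAt
    · exact fun s _ => (hd s).differentiableAt.differentiableWithinAt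
    · intro s hs
      rw [interior_Icc] at hs
      rw [(hd s).deriv]
      have hs' : 0 < Real.sin s := Real.sin_pos_of_pos_of_lt_pi hs.1 (by linarith [hs.2, Real.pi_gt_three])
      have := key_ineq s hs' g hg
      have e : 2 * ∑ S : Finset (Fin n),
        (-((S.card : ℝ) * Real.cos s ^ (S.card - 1) * (-Real.sin s))) * fcoef n g S ^ 2 =
        2 * Real.sin s * ∑ S, (S.card : ℝ) * Real.cos s ^ (S.card - 1) * fcoef n g S ^ 2 := by
        rw [mul_assoc, Finset.mul_sum _ _ (Real.sin s)]
        congr 1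
        apply Finset.sum_congr rfl
        intro S _
        ring
      rw [e]
      linarith
  have := mono (Set.left_mem_Icc.2 zero_le_one) ⟨h0, h1⟩ h0
  simp only [h] at this
  simp at this
  linarith

lemma cos_pow_bound (d : ℕ) (hd : 1 ≤ d) (k : ℕ) (hk : d ≤ k) :
    1 / 5 ≤ 1 - Real.cos (1 / Real.sqrt d) ^ k := by
  have hd' : (1 : ℝ) ≤ d := by exact_mod_cast hd
  have hs : 1 ≤ Real.sqrt d := Real.one_le_sqrt.2 hd'
  set t := 1 / Real.sqrt d with ht
  have t0 : 0 < t := by positivity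
  have t1 : t ≤ 1 := by rw [ht, div_le_one (by positivity)]; exact hs
  have t2 : t ^ 2 * d = 1 := by
    rw [ht, div_pow, Real.sq_sqrt (by positivity)]; field_simp
  have c0 : 0 ≤ Real.cos t := Real.cos_nonneg_of_mem_Icc ⟨by linarith [Real.pi_gt_three], by linarith [Real.pi_gt_three]⟩
  have c1 : Real.cos t ≤ 1 - t ^ 2 / 4 := by
    have h := (abs_le.1 (Real.cos_bound (x := t) (by rwa [abs_of_pos t0]))).2
    rw [abs_of_pos t0] at h
    nlinarith [mul_nonneg (sq_nonneg t) (show 0 ≤ 1 - t ^ 2 by nlinarith)]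
  have c2 : Real.cos t * (1 + t ^ 2 / 4) ≤ 1 := by nlinarith [sq_nonneg (t ^ 2)]
  have c3 : (Real.cos t * (1 + t ^ 2 / 4)) ^ d ≤ 1 := pow_le_one₀ (by positivity) c2
  have c4 := one_add_mul_le_pow (a := t ^ 2 / 4) (by nlinarith [sq_nonneg t]) d
  have c5 : Real.cos t ^ k ≤ Real.cos t ^ d := pow_le_pow_of_le_one c0 (Real.cos_le_one t) hk
  rw [mul_pow] at c3
  have c6 : (5 : ℝ) / 4 ≤ (1 + t ^ 2 / 4) ^ d := by
    refine le_trans (le_of_eq ?_) c4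
    linarith
  have c7 : 0 ≤ Real.cos t ^ d := by positivity
  nlinarith

theorem grad_lower_bound_level_ge_d :
    ∃ c : ℝ, 0 < c ∧ ∀ (d : ℕ), 1 ≤ d → ∀ (n : ℕ) (f : (Fin n → Bool) → Bool),
      hcExp n (fun x => gradNorm2 (toReal f) x) ≥
        c * Real.sqrt d * wGe n (toReal f) d := by
  refine ⟨2 / 5, by norm_num, ?_⟩
  intro d hd n f
  have hd' : (1 : ℝ) ≤ d := by exact_mod_cast hd
  have hs : 1 ≤ Real.sqrt d := Real.one_le_sqrt.2 hd'
  have hg : ∀ x, toReal f x ^ 2 ≤ 1 := by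
    intro x
    unfold toReal
    split_ifs <;> norm_num
  have t1 : 1 / Real.sqrt d ≤ 1 := by rw [div_le_one (by positivity)]; exact hs
  have h := integrated (1 / Real.sqrt d) (by positivity) t1 (toReal f) hg
  have h2 : 1 / 5 * wGe n (toReal f) d ≤
      ∑ S, (1 - Real.cos (1 / Real.sqrt d) ^ S.card) * fcoef n (toReal f) S ^ 2 := by
    unfold wGe
    rw [Finset.mul_sum]
    refine le_trans (Finset.sum_le_sum (g := fun S : Finset (Fin n) =>
      (1 - Real.cos (1 / Real.sqrt d) ^ S.card) * fcoef n (toReal f) S ^ 2) ?_) ?_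
    · intro S hS
      have := cos_pow_bound d hd S.card (by simpa using hS)
      exact mul_le_mul_of_nonneg_right this (sq_nonneg _)
    · apply Finset.sum_le_sum_of_subset_of_nonneg (Finset.subset_univ _)
      intro S _ _
      apply mul_nonneg _ (sq_nonneg _)
      have := pow_le_one₀ (n := S.card) (abs_nonneg _) (Real.abs_cos_le_one (1 / Real.sqrt d))
      rw [← abs_pow] at this
      linarith [le_abs_self (Real.cos (1 / Real.sqrt d) ^ S.card)]
  have h3 : 2 / 5 * wGe n (toReal f) d ≤
      1 / Real.sqrt d * hcExp n (fun x => gradNorm2 (toReal f) x) := by linarith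
  rw [one_div_mul_eq_div, le_div_iff₀ (by positivity)] at h3
  linarith

end
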